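/- arXiv:1908.10029 — 5 statements merged into one kernel-verified Lean document; each statement's English description precedes it below -/
import Mathlib

section
/- For all nonnegative integers n and m, the mapped Chebyshev functions satisfy ∫_ℝ 𝕋_n(x) 𝕋_m(x) dx = δ_{nm}; that is, the family {𝕋_n}_{n≥0} is orthonormal in L²(ℝ). -/
/-!
The substitution `θ = π / 2 - arctan x` maps `ℝ` bijectively onto `(0, π)`, with
`|dθ| = dx / (1 + x²)` and `cos θ = sin (arctan x) = x / √(1 + x²)`. It therefore turns
`∫ T_n T_m (x / √(1 + x²)) / (1 + x²) dx` into `∫₀^π T_n T_m (cos θ) dθ`, which is the pairing of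
`T_n` and `T_m` for the Chebyshev weight. The classical orthogonality relations are in Mathlib
(`Polynomial.Chebyshev.measureT`), and the factors `(c_n π / 2)^(-1/2)` are the normalizations.
-/

open MeasureTheory Real

/-- `c 0 = 2`, `c n = 1` for `n ≥ 1`. -/
noncomputable def cCheb (n : ℕ) : ℝ := if n = 0 then 2 else 1

/-- The mapped Chebyshev functions (MCFs)
`𝕋_n(x) = (c_n π/2)^{-1/2} (1+x²)^{-1/2} T_n(x/√(1+x²))`. -/
noncomputable def MCF (n : ℕ) (x : ℝ) : ℝ :=
  (Real.sqrt (cCheb n * Real.pi / 2))⁻¹ * (Real.sqrt (1 + x ^ 2))⁻¹ *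
    (Polynomial.Chebyshev.T ℝ n).eval (x / Real.sqrt (1 + x ^ 2))

open Polynomial.Chebyshev in
/-- The algebraic map `x ↦ x / √(1 + x²)` carries `dx / (1 + x²)` to the Chebyshev measure
`dy / √(1 - y²)` on `(-1, 1)`. -/
lemma integral_comp_div_sqrt (g : ℝ → ℝ) :
    ∫ x : ℝ, (1 + x ^ 2)⁻¹ * g (x / √(1 + x ^ 2)) = ∫ y, g y ∂measureT := by
  have himg : (fun x : ℝ => π / 2 - arctan x) '' Set.univ = Set.Ioo 0 π := by
    rw [show (fun x : ℝ => π / 2 - arctan x) = (fun y => π / 2 - y) ∘ arctan from rfl,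
      Set.image_comp, Set.image_univ, range_arctan, Set.image_const_sub_Ioo]
    congr 1 <;> ring
  have hinj : Set.InjOn (fun x : ℝ => π / 2 - arctan x) Set.univ := fun x _ y _ h =>
    arctan_injective (sub_right_injective h)
  have hsub := integral_image_eq_integral_abs_deriv_smul MeasurableSet.univ
    (fun x _ => ((hasDerivAt_arctan x).const_sub (π / 2)).hasDerivWithinAt) hinj
    (fun θ => g (cos θ))
  rw [himg, setIntegral_univ] at hsub
  rw [integral_measureT_eq_integral_cos, intervalIntegral.integral_of_le pi_pos.le,
    integral_Ioc_eq_integral_Ioo, hsub]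
  refine integral_congr_ae (.of_forall fun x => ?_)
  have hx : 0 < 1 + x ^ 2 := by positivity
  simp only [cos_pi_div_two_sub, sin_arctan, smul_eq_mul, abs_neg, one_div,
    abs_of_pos (inv_pos.2 hx)]

open Polynomial.Chebyshev in
/-- The mapped Chebyshev functions are orthonormal in `L²(ℝ)`. -/
theorem MCF_orthonormal (n m : ℕ) :
    ∫ x : ℝ, MCF n x * MCF m x = if n = m then (1 : ℝ) else 0 := by
  have hprod : ∀ x : ℝ, MCF n x * MCF m x =
      ((√(cCheb n * π / 2))⁻¹ * (√(cCheb m * π / 2))⁻¹) * ((1 + x ^ 2)⁻¹ *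
        (fun y => (T ℝ n).eval y * (T ℝ m).eval y) (x / √(1 + x ^ 2))) := fun x => by
    have hs : (1 + x ^ 2)⁻¹ = (√(1 + x ^ 2))⁻¹ * (√(1 + x ^ 2))⁻¹ := by
      rw [← mul_inv, mul_self_sqrt (by positivity)]
    rw [hs]
    simp only [MCF]
    ring
  simp_rw [hprod]
  rw [integral_const_mul, integral_comp_div_sqrt fun y => (T ℝ n).eval y * (T ℝ m).eval y]
  split_ifs with h
  · subst h
    rw [← mul_inv]
    rcases eq_or_ne n 0 with rfl | hn
    · have := integral_eval_T_real_mul_self_measureT_zero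
      rw [Nat.cast_zero, this, mul_self_sqrt (by simp [cCheb, pi_pos.le])]
      simp [cCheb, pi_ne_zero]
    · rw [integral_T_real_mul_self_measureT_of_ne_zero hn,
        mul_self_sqrt (by simp [cCheb, hn]; positivity)]
      simp [cCheb, hn, pi_ne_zero]
  · rw [integral_eval_T_real_mul_eval_T_real_measureT_of_ne h, mul_zero]
end

section
/- Define S_{nm} = ∫_ℝ 𝕋_n'(x) 𝕋_m'(x) dx. Then: (i) for every integer n ≥ 2, S_{nn} = (1/c_n)[ (4c_{n-1} − c_{n-2})(n−1)²/16 + (4c_{n+1} − c_{n+2})(n+1)²/16 − c_n/4 ]; (ii) for every integer n ≥ 1, S_{n,n+2} = (1/√(c_n c_{n+2}))[ (c_n − c_{n+2})(n+1)/8 − c_{n+1}(n+1)²/4 ] = −(n+1)²/4; (iii) for every integer n ≥ 1, S_{n,n+4} = (1/√(c_n c_{n+4})) · c_{n+2}(n+1)(n+3)/16 = (n+1)(n+3)/16. -/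
/-!
With `x = tan φ` one has `x / √(1 + x²) = sin φ` and `1 / √(1 + x²) = cos φ`, so in the variable
`θ = π / 2 - φ` the function `MCF n` is `(cₙ π / 2)^(-1/2) sin θ cos (n θ)`. Changing variables, the
stiffness entry becomes `2 / (π √(cₙ cₘ))` times the integral over `[0, π]` of
`sin² θ · Fₙ'(θ) · Fₘ'(θ)`, where `Fₙ(θ) = sin θ cos (n θ)` satisfies
`2 Fₙ'(θ) = (n + 1) cos ((n + 1) θ) - (n - 1) cos ((n - 1) θ)`.
The product-to-sum formulas turn this integrand into a combination of cosines `cos (k θ)`, `k ∈ ℤ`,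
whose integrals over `[0, π]` vanish except for `k = 0` (`Sent_eq`). Reading off the frequencies
that vanish gives the three formulas; for `n = 2` in the diagonal case the frequency
`2 (n - 1) - 2` also vanishes, which is what the constants `cₙ₋₂` account for.
-/

open MeasureTheory Real

/-- The stiffness entries `S_{nm} = ∫_ℝ 𝕋_n'(x) 𝕋_m'(x) dx`. -/
noncomputable def Sent (n m : ℕ) : ℝ := ∫ x : ℝ, deriv (MCF n) x * deriv (MCF m) x

/-- The integral of `cos (k θ)` over `[0, π]` for an integer frequency `k`. -/
noncomputable def cosInt (k : ℤ) : ℝ := ∫ θ in (0 : ℝ)..π, cos (k * θ)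

lemma cosInt_of_eq {k : ℤ} (hk : k = 0) : cosInt k = π := by
  simp [cosInt, hk]

lemma cosInt_of_ne {k : ℤ} (hk : k ≠ 0) : cosInt k = 0 := by
  have hk' : (k : ℝ) ≠ 0 := by exact_mod_cast hk
  simp [cosInt, intervalIntegral.integral_comp_mul_left (fun t => cos t) hk',
    Real.sin_int_mul_pi]

/-- The integral of `(1 - cos 2θ) cos (a θ) cos (b θ)` over `[0, π]`, expanded by the
product-to-sum formulas. -/
noncomputable def cosProdInt (a b : ℤ) : ℝ :=
  (cosInt (a + b) + cosInt (a - b)) / 2 -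
    (cosInt (a + b + 2) + cosInt (a + b - 2) + cosInt (a - b + 2) + cosInt (a - b - 2)) / 4

lemma cosProdInt_eq (a b : ℤ) :
    ∫ θ in (0 : ℝ)..π, (1 - cos (2 * θ)) * (cos (a * θ) * cos (b * θ)) = cosProdInt a b := by
  have hc : ∀ k : ℤ, IntervalIntegrable (fun θ : ℝ => cos (k * θ)) volume 0 π := fun k =>
    Continuous.intervalIntegrable (by fun_prop) _ _
  have hfun : ∀ θ : ℝ, (1 - cos (2 * θ)) * (cos (a * θ) * cos (b * θ)) =
      (cos ((a + b : ℤ) * θ) + cos ((a - b : ℤ) * θ)) / 2 -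
      (cos ((a + b + 2 : ℤ) * θ) + cos ((a + b - 2 : ℤ) * θ) + cos ((a - b + 2 : ℤ) * θ)
        + cos ((a - b - 2 : ℤ) * θ)) / 4 := by
    intro θ
    push_cast
    simp only [add_mul, sub_mul, cos_add, cos_sub, sin_add, sin_sub]
    ring
  simp only [hfun]
  rw [intervalIntegral.integral_sub
      (((hc _).add (hc _)).div_const _)
      (((((hc _).add (hc _)).add (hc _)).add (hc _)).div_const _),
    intervalIntegral.integral_div, intervalIntegral.integral_div,
    intervalIntegral.integral_add ((hc _).add (hc _) |>.add (hc _)) (hc _),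
    intervalIntegral.integral_add ((hc _).add (hc _)) (hc _),
    intervalIntegral.integral_add (hc _) (hc _),
    intervalIntegral.integral_add (hc _) (hc _)]
  rfl

/-- The normalizing constant of `MCF n`. -/
noncomputable def mcfK (n : ℕ) : ℝ := (Real.sqrt (cCheb n * Real.pi / 2))⁻¹

/-- The derivative of `θ ↦ sin θ cos (n θ)`. -/
noncomputable def mcfG (n : ℕ) (θ : ℝ) : ℝ := cos θ * cos (n * θ) - n * sin θ * sin (n * θ)

lemma mcfG_eq (n : ℕ) (θ : ℝ) :
    mcfG n θ =
      ((n + 1) * cos (((n : ℤ) + 1 : ℤ) * θ) - (n - 1) * cos (((n : ℤ) - 1 : ℤ) * θ)) / 2 := by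
  simp only [mcfG]
  push_cast
  simp only [add_mul, sub_mul, cos_add, cos_sub, one_mul]
  ring

lemma MCF_eq (n : ℕ) (x : ℝ) :
    MCF n x = mcfK n * (sin (π / 2 - arctan x) * cos (n * (π / 2 - arctan x))) := by
  have h := Polynomial.Chebyshev.T_real_cos (π / 2 - arctan x) n
  rw [cos_pi_div_two_sub, sin_arctan] at h
  rw [MCF, h, sin_pi_div_two_sub, cos_arctan, mcfK]
  push_cast
  ring

lemma hasDerivAt_MCF (n : ℕ) (x : ℝ) :
    HasDerivAt (MCF n) (-mcfK n * mcfG n (π / 2 - arctan x) * (1 / (1 + x ^ 2))) x := by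
  have ht : HasDerivAt (fun x => π / 2 - arctan x) (-(1 / (1 + x ^ 2))) x :=
    (hasDerivAt_arctan x).const_sub _
  have h := ((ht.sin).mul ((ht.const_mul (n : ℝ)).cos)).const_mul (mcfK n)
  rw [show MCF n = _ from funext (MCF_eq n)]
  refine h.congr_deriv ?_
  simp only [mcfG]
  ring

/-- The stiffness entry after the substitution `x = tan (π / 2 - θ)`. -/
lemma Sent_eq_integral (n m : ℕ) :
    Sent n m = ∫ θ in (0 : ℝ)..π, mcfK n * mcfK m * (sin θ ^ 2 * (mcfG n θ * mcfG m θ)) := by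
  set h : ℝ → ℝ := fun θ => mcfK n * mcfK m * (sin θ ^ 2 * (mcfG n θ * mcfG m θ)) with hh
  have h1 := integral_image_eq_integral_abs_deriv_smul (f := arctan)
    (f' := fun x => 1 / (1 + x ^ 2)) MeasurableSet.univ
    (fun x _ => (hasDerivAt_arctan x).hasDerivWithinAt) arctan_injective.injOn
    (fun φ => h (π / 2 - φ))
  rw [Set.image_univ, range_arctan, Measure.restrict_univ, ← integral_Ioc_eq_integral_Ioo,
    ← intervalIntegral.integral_of_le (by linarith [pi_pos]),
    intervalIntegral.integral_comp_sub_left h (π / 2)] at h1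
  rw [sub_self, show π / 2 - -(π / 2) = π by ring] at h1
  rw [h1, Sent]
  congr 1
  ext x
  have hx : 0 < 1 + x ^ 2 := by positivity
  rw [(hasDerivAt_MCF n x).deriv, (hasDerivAt_MCF m x).deriv, hh, abs_of_pos (by positivity)]
  simp only [smul_eq_mul]
  rw [sin_pi_div_two_sub, cos_sq_arctan]
  ring

/-- The stiffness entry as a combination of integrals of cosines with integer frequencies. -/
lemma Sent_eq (n m : ℕ) :
    Sent n m = mcfK n * mcfK m / 8 *
      ((n + 1) * (m + 1) * cosProdInt (n + 1) (m + 1)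
        - (n + 1) * (m - 1) * cosProdInt (n + 1) (m - 1)
        - (n - 1) * (m + 1) * cosProdInt (n - 1) (m + 1)
        + (n - 1) * (m - 1) * cosProdInt (n - 1) (m - 1)) := by
  have hc : ∀ (r : ℝ) (a b : ℤ), IntervalIntegrable
      (fun θ : ℝ => r * ((1 - cos (2 * θ)) * (cos (a * θ) * cos (b * θ)))) volume 0 π :=
    fun r a b => Continuous.intervalIntegrable (by fun_prop) _ _
  simp only [← cosProdInt_eq]
  rw [Sent_eq_integral]
  simp only [← intervalIntegral.integral_const_mul]
  rw [← intervalIntegral.integral_sub (hc _ _ _) (hc _ _ _),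
    ← intervalIntegral.integral_sub ((hc _ _ _).sub (hc _ _ _)) (hc _ _ _),
    ← intervalIntegral.integral_add (((hc _ _ _).sub (hc _ _ _)).sub (hc _ _ _)) (hc _ _ _),
    ← intervalIntegral.integral_const_mul]
  congr 1
  ext θ
  rw [mcfG_eq, mcfG_eq, sin_sq_eq_half_sub]
  ring

lemma cCheb_of_pos {n : ℕ} (hn : 1 ≤ n) : cCheb n = 1 := by
  rw [cCheb, if_neg (by omega)]

lemma mcfK_mul {n m : ℕ} (hn : 1 ≤ n) (hm : 1 ≤ m) : mcfK n * mcfK m = 2 / π := by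
  rw [mcfK, mcfK, cCheb_of_pos hn, cCheb_of_pos hm, ← mul_inv,
    Real.mul_self_sqrt (by positivity), one_mul, inv_div]

/-- Explicit formulas for the nonzero stiffness entries of the MCFs. -/
theorem MCF_stiffness_entries :
    (∀ n : ℕ, 2 ≤ n →
      Sent n n = (cCheb n)⁻¹ *
        ((4 * cCheb (n - 1) - cCheb (n - 2)) * ((n : ℝ) - 1) ^ 2 / 16 +
         (4 * cCheb (n + 1) - cCheb (n + 2)) * ((n : ℝ) + 1) ^ 2 / 16 -
         cCheb n / 4)) ∧
    (∀ n : ℕ, 1 ≤ n →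
      Sent n (n + 2) = (Real.sqrt (cCheb n * cCheb (n + 2)))⁻¹ *
        ((cCheb n - cCheb (n + 2)) * ((n : ℝ) + 1) / 8 -
          cCheb (n + 1) * ((n : ℝ) + 1) ^ 2 / 4) ∧
      Sent n (n + 2) = -((n : ℝ) + 1) ^ 2 / 4) ∧
    (∀ n : ℕ, 1 ≤ n →
      Sent n (n + 4) = (Real.sqrt (cCheb n * cCheb (n + 4)))⁻¹ *
        (cCheb (n + 2) * ((n : ℝ) + 1) * ((n : ℝ) + 3) / 16) ∧
      Sent n (n + 4) = ((n : ℝ) + 1) * ((n : ℝ) + 3) / 16) := by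
  have hpi : π ≠ 0 := pi_ne_zero
  refine ⟨fun n hn => ?_, fun n hn => ?_, fun n hn => ?_⟩
  · rw [Sent_eq, mcfK_mul (by omega) (by omega), cCheb_of_pos (n := n) (by omega),
      cCheb_of_pos (n := n - 1) (by omega), cCheb_of_pos (n := n + 1) (by omega),
      cCheb_of_pos (n := n + 2) (by omega)]
    rcases hn.eq_or_lt with rfl | hn3
    · simp (disch := omega) only [cosProdInt, cosInt_of_eq, cosInt_of_ne]
      norm_num [cCheb]
      field_simp
      norm_num
    · rw [cCheb_of_pos (n := n - 2) (by omega)]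
      simp (disch := omega) only [cosProdInt, cosInt_of_eq, cosInt_of_ne]
      field_simp
      ring
  · have key : Sent n (n + 2) = -((n : ℝ) + 1) ^ 2 / 4 := by
      rw [Sent_eq, mcfK_mul (by omega) (by omega)]
      -- For `n = 1` additional frequencies vanish, but with coefficient `n - 1 = 0`.
      rcases hn.eq_or_lt with rfl | hn2
      · simp (disch := omega) only [cosProdInt, cosInt_of_eq, cosInt_of_ne]
        push_cast
        field_simp
        ring
      · simp (disch := omega) only [cosProdInt, cosInt_of_eq, cosInt_of_ne]
        push_cast
        field_simp
        ring
    refine ⟨?_, key⟩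
    rw [key, cCheb_of_pos hn, cCheb_of_pos (n := n + 2) (by omega),
      cCheb_of_pos (n := n + 1) (by omega)]
    norm_num
    ring
  · have key : Sent n (n + 4) = ((n : ℝ) + 1) * ((n : ℝ) + 3) / 16 := by
      rw [Sent_eq, mcfK_mul (by omega) (by omega)]
      simp (disch := omega) only [cosProdInt, cosInt_of_eq, cosInt_of_ne]
      push_cast
      field_simp
      ring
    refine ⟨?_, key⟩
    rw [key, cCheb_of_pos hn, cCheb_of_pos (n := n + 2) (by omega),
      cCheb_of_pos (n := n + 4) (by omega)]
    norm_num
end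

section
/- Let N be a natural number and for 0 ≤ j ≤ N set y_j = cos((2j+1)π/(2N+2)) (the Chebyshev–Gauss nodes). Then for every real polynomial Q of degree at most 2N+1, ∫_ℝ (1+x²)^{-1} Q( x/√(1+x²) ) dx = (π/(N+1)) Σ_{j=0}^N Q(y_j). Equivalently, with mapped nodes x_j = y_j/√(1−y_j²) and weights ω_j = π/((N+1)(1−y_j²)), the mapped Chebyshev–Gauss quadrature Σ_{j=0}^N u(x_j) v(x_j) ω_j is exact for ∫_ℝ u v dx whenever u = (1+x²)^{-1/2} φ(x/√(1+x²)) and v = (1+x²)^{-1/2} ψ(x/√(1+x²)) with polynomials φ, ψ whose degrees sum to at most 2N+1. -/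
/-!
The substitution `x = tan θ` turns `(1 + x²)⁻¹ dx` into `dθ` and `x / √(1 + x²)` into `sin θ`, so
the left-hand side is `∫ Q (sin θ)` over `(-π/2, π/2)`. Reflecting `θ ↦ π/2 - θ` gives
`∫ Q (cos θ)` over `(0, π)`, which is the integral of `Q` against the Chebyshev weight
`(1 - y²)^(-1/2)`. Chebyshev–Gauss exactness with `N + 1` nodes
(`Polynomial.Chebyshev.integral_eq_sumZeroes`) then evaluates it, since `deg Q < 2 (N + 1)`.
-/

open MeasureTheory Real

/-- The algebraic map `x ↦ x / √(1 + x²)` pushes `(1 + x²)⁻¹ dx` on the line forward to the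
Chebyshev weight. No regularity of `f` is needed, the change of variables being an identity of
Bochner integrals for every `f`. -/
theorem integral_mapped_eq_integral_measureT (f : ℝ → ℝ) :
    ∫ x : ℝ, (1 + x ^ 2)⁻¹ * f (x / √(1 + x ^ 2)) =
      ∫ y, f y ∂Polynomial.Chebyshev.measureT := by
  have hcov := integral_image_eq_integral_abs_deriv_smul (s := Set.univ) MeasurableSet.univ
    (fun x _ => (hasDerivAt_arctan' x).hasDerivWithinAt) arctan_injective.injOn
    (fun θ => f (sin θ))
  rw [Set.image_univ, range_arctan, setIntegral_univ] at hcov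
  calc ∫ x : ℝ, (1 + x ^ 2)⁻¹ * f (x / √(1 + x ^ 2))
      = ∫ x : ℝ, |(1 + x ^ 2)⁻¹| • f (sin (arctan x)) := by
        congr with x
        rw [sin_arctan, abs_of_pos (by positivity), smul_eq_mul]
    _ = ∫ θ in (-(π / 2))..(π / 2), f (sin θ) := by
        rw [← hcov, intervalIntegral.integral_of_le (by linarith [pi_pos]),
          integral_Ioc_eq_integral_Ioo]
    _ = ∫ θ in 0..π, f (cos θ) := by
        simp_rw [← sin_pi_div_two_sub]
        rw [intervalIntegral.integral_comp_sub_left (fun θ => f (sin θ)) (π / 2)]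
        congr 1 <;> ring
    _ = _ := Polynomial.Chebyshev.integral_measureT_eq_integral_cos.symm

/-- Exactness of the mapped Chebyshev–Gauss quadrature: for every polynomial
`Q` of degree at most `2N+1`,
`∫_ℝ (1+x²)^{-1} Q(x/√(1+x²)) dx = (π/(N+1)) Σ_{j=0}^N Q(y_j)`, where
`y_j = cos((2j+1)π/(2N+2))` are the Chebyshev–Gauss nodes. -/
theorem mapped_chebyshev_gauss_quadrature (N : ℕ) (Q : Polynomial ℝ)
    (hQ : Q.degree ≤ (2 * N + 1 : ℕ)) :
    ∫ x : ℝ, (1 + x ^ 2)⁻¹ * Q.eval (x / Real.sqrt (1 + x ^ 2)) =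
      Real.pi / (N + 1) *
        ∑ j : Fin (N + 1),
          Q.eval (Real.cos ((2 * (j : ℝ) + 1) * Real.pi / (2 * N + 2))) := by
  rw [integral_mapped_eq_integral_measureT (fun y => Q.eval y),
    Polynomial.Chebyshev.integral_eq_sumZeroes N.succ_ne_zero
      (lt_of_le_of_lt hQ (by norm_cast; omega)),
    Polynomial.Chebyshev.sumZeroes, Finset.sum_range]
  push_cast
  congr! 4 with j
  field_simp
end

section
/- Let N be a natural number, y_j = cos((2j+1)π/(2N+2)), x_j = y_j/√(1−y_j²), and ω_j = π/((N+1)(1−y_j²)) for 0 ≤ j ≤ N. Then for all 0 ≤ n, m ≤ N, Σ_{j=0}^N 𝕋_n(x_j) 𝕋_m(x_j) ω_j = δ_{nm}; that is, the mapped Chebyshev functions of degree at most N are orthonormal with respect to the discrete inner product induced by the mapped Chebyshev–Gauss quadrature. -/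
/-!
The substitution `x = y / √(1 - y²)` satisfies `1 + x² = 1 / (1 - y²)` and `x / √(1 + x²) = y`, so
a mapped Chebyshev function at a mapped node is `√(1 - y²) T_n(y)` up to normalization. The
two factors `√(1 - y²)` cancel the factor `1 - y²` in the mapped weight, and the sum becomes the
classical Chebyshev–Gauss sum `Σ_j (π / (N + 1)) T_n(y_j) T_m(y_j)`, which is Mathlib's
`Polynomial.Chebyshev.sumZeroes (N + 1)`. Since `2 T_n T_m = T_{n+m} + T_{n-m}`, it suffices to know
that this sum kills every `T_k` with `2(N + 1) ∤ k`; the bounds `n, m ≤ N` force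
`|n ± m| < 2(N + 1)`, so the only surviving terms are those with `n ± m = 0`.
-/


open MeasureTheory Real

/-- The Chebyshev–Gauss nodes `y_j = cos((2j+1)π/(2N+2))`. -/
noncomputable def cgNode (N j : ℕ) : ℝ :=
  Real.cos ((2 * (j : ℝ) + 1) * Real.pi / (2 * (N : ℝ) + 2))

/-- The mapped Chebyshev–Gauss nodes `x_j = y_j/√(1−y_j²)`. -/
noncomputable def cgMappedNode (N j : ℕ) : ℝ :=
  cgNode N j / Real.sqrt (1 - cgNode N j ^ 2)

/-- The mapped Chebyshev–Gauss weights `ω_j = π/((N+1)(1−y_j²))`. -/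
noncomputable def cgMappedWeight (N j : ℕ) : ℝ :=
  Real.pi / (((N : ℝ) + 1) * (1 - cgNode N j ^ 2))

open Polynomial.Chebyshev in
/-- Discrete orthogonality of the Chebyshev polynomials at the zeros of `T_{N+1}`. -/
lemma sumZeroes_T_mul_T {N n m : ℕ} (hn : n ≤ N) (hm : m ≤ N) :
    sumZeroes (N + 1) (T ℝ n * T ℝ m) = if n = m then cCheb n * π / 2 else 0 := by
  have key : ∀ k : ℤ, |k| < 2 * (N + 1) →
      sumZeroes (N + 1) (T ℝ k) = if k = 0 then π else 0 := by
    intro k hk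
    split_ifs with h
    · rw [h, sumZeroes_T_zero (Nat.succ_ne_zero N)]
    · refine sumZeroes_T_of_not_dvd fun hd => h (Int.eq_zero_of_abs_lt_dvd hd ?_)
      push_cast
      exact hk
  have hadd : ∀ P Q : Polynomial ℝ,
      sumZeroes (N + 1) (P + Q) = sumZeroes (N + 1) P + sumZeroes (N + 1) Q := fun P Q => by
    simp only [sumZeroes, Polynomial.eval_add, Finset.sum_add_distrib, mul_add]
  have hdouble : 2 * sumZeroes (N + 1) (T ℝ n * T ℝ m) =
      sumZeroes (N + 1) (T ℝ (n + m)) + sumZeroes (N + 1) (T ℝ (n - m)) := by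
    rw [← hadd, ← T_mul_T, mul_assoc, two_mul, two_mul, hadd]
  rw [key _ (by rw [abs_lt]; omega), key _ (by rw [abs_lt]; omega)] at hdouble
  unfold cCheb
  split_ifs at hdouble ⊢ <;> first | omega | linarith

lemma one_sub_cgNode_sq_pos {N j : ℕ} (hj : j < N + 1) : 0 < 1 - cgNode N j ^ 2 := by
  have hj' : (j : ℝ) + 1 ≤ N + 1 := by exact_mod_cast hj
  have hs : 0 < sin ((2 * (j : ℝ) + 1) * π / (2 * (N : ℝ) + 2)) := by
    apply sin_pos_of_pos_of_lt_pi
    · positivity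
    · rw [div_lt_iff₀ (by positivity)]
      nlinarith [pi_pos]
  unfold cgNode
  rw [← sin_sq]
  positivity

/-- The algebraic map sends `y / √(1 - y²)` back to `y`, so a mapped Chebyshev function there is a
weighted Chebyshev polynomial. -/
lemma MCF_div_sqrt (n : ℕ) {y : ℝ} (hy : 0 < 1 - y ^ 2) :
    MCF n (y / √(1 - y ^ 2)) =
      (√(cCheb n * π / 2))⁻¹ * √(1 - y ^ 2) * (Polynomial.Chebyshev.T ℝ n).eval y := by
  have hs : 0 < √(1 - y ^ 2) := sqrt_pos.2 hy
  have h : √(1 + (y / √(1 - y ^ 2)) ^ 2) = (√(1 - y ^ 2))⁻¹ := by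
    rw [div_pow, sq_sqrt hy.le, ← sqrt_inv]
    congr 1
    field_simp
    ring
  unfold MCF
  rw [h, inv_inv, div_inv_eq_mul, div_mul_cancel₀ _ hs.ne']

/-- Discrete orthonormality of the mapped Chebyshev functions with respect to
the mapped Chebyshev–Gauss quadrature:
`Σ_{j=0}^N 𝕋_n(x_j) 𝕋_m(x_j) ω_j = δ_{nm}` for `0 ≤ n, m ≤ N`. -/
theorem MCF_discrete_orthonormal (N : ℕ) (n m : ℕ) (hn : n ≤ N) (hm : m ≤ N) :
    ∑ j : Fin (N + 1),
        MCF n (cgMappedNode N j) * MCF m (cgMappedNode N j) *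
          cgMappedWeight N j =
      if n = m then (1 : ℝ) else 0 := by
  have hsum : ∑ j : Fin (N + 1),
        MCF n (cgMappedNode N j) * MCF m (cgMappedNode N j) * cgMappedWeight N j =
      (√(cCheb n * π / 2))⁻¹ * (√(cCheb m * π / 2))⁻¹ *
        Polynomial.Chebyshev.sumZeroes (N + 1)
          (Polynomial.Chebyshev.T ℝ n * Polynomial.Chebyshev.T ℝ m) := by
    rw [Fin.sum_univ_eq_sum_range
      (fun j => MCF n (cgMappedNode N j) * MCF m (cgMappedNode N j) * cgMappedWeight N j),
      Polynomial.Chebyshev.sumZeroes, Finset.mul_sum, Finset.mul_sum]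
    refine Finset.sum_congr rfl fun j hj => ?_
    have hy := one_sub_cgNode_sq_pos (Finset.mem_range.1 hj)
    have hnode : cos ((2 * (j : ℝ) + 1) / (2 * ((N + 1 : ℕ) : ℝ)) * π) = cgNode N j := by
      unfold cgNode
      congr 1
      push_cast
      ring
    rw [hnode, cgMappedNode, MCF_div_sqrt n hy, MCF_div_sqrt m hy, cgMappedWeight,
      Polynomial.eval_mul]
    have hsq := sq_sqrt hy.le
    have hN : (N : ℝ) + 1 ≠ 0 := by positivity
    push_cast
    field_simp
    rw [hsq]
  rw [hsum, sumZeroes_T_mul_T hn hm]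
  split_ifs with h
  · subst h
    have hc : 0 < cCheb n * π / 2 := by
      have : 0 < cCheb n := by unfold cCheb; split_ifs <;> norm_num
      positivity
    rw [← mul_inv, mul_self_sqrt hc.le, inv_mul_cancel₀ hc.ne']
  · rw [mul_zero]
end

section
/- Let d ≥ 1 be an integer and s > 0 a real number. For every x ∈ ℝ^d, (2π)^{−d/2} ∫_{ℝ^d} |ξ|^{2s} · 2^{−d/2} e^{−|ξ|²/4} e^{i⟨x,ξ⟩} dξ = (2^{2s} Γ(s+d/2)/Γ(d/2)) · Σ_{n=0}^∞ ( Γ(s+d/2+n) Γ(d/2) / ( Γ(s+d/2) Γ(d/2+n) ) ) · (−|x|²)^n / n!; that is, the integral fractional Laplacian of the Gaussian satisfies (−Δ)^s e^{−|x|²} = (2^{2s} Γ(s+d/2)/Γ(d/2)) · ₁F₁(s+d/2; d/2; −|x|²). -/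
/-!
Write `q(v) = ⟪w, v⟫`. Expanding `exp (c q(v))` in powers of `c`, the integral of
`‖v‖ ^ (2s) exp (-‖v‖² / 4) exp (c q(v))` over `V = ℝᵈ` becomes a power series in `c` whose
coefficients are, up to the factors `1 / n!`, the moments of `q` against the weight `‖v‖ ^ (2s) exp (-‖v‖² / 4)`
(`hasSum_gaussMoment`).

Since `q ^ n` is homogeneous of degree `n`, polar coordinates split its moment into a spherical
integral, independent of `s`, and a radial Gamma integral (`gaussMoment_polar`). The moment of order
`s` is therefore `4 ^ s Γ(s + (n + d)/2) / Γ((n + d)/2)` times the moment of order `0`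
(`gaussMoment_eq_mul_zero`), and no spherical integral has to be computed.

For `s = 0` the generating function is the Gaussian Fourier-Laplace integral
`(4π) ^ (d/2) exp (c² ‖w‖²)`; comparing power series in `c` gives the moments of order `0`: the odd
ones vanish and the `2m`-th, divided by `(2m)!`, is `(4π) ^ (d/2) ‖w‖ ^ (2m) / m!`
(`gaussMoment_zero`). Taking `c = i` yields the `₁F₁` series.
-/

open MeasureTheory Real Complex
open Set Module
open scoped InnerProductSpace

section Moments

variable {V : Type*} [NormedAddCommGroup V] [InnerProductSpace ℝ V] [FiniteDimensional ℝ V]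
  [MeasurableSpace V] [BorelSpace V]

/-- The `n`-th moment of the linear form `⟪w, ·⟫` against the unnormalised weight
`‖v‖ ^ (2s) exp (-‖v‖² / 4)`. -/
noncomputable def gaussMoment (s : ℝ) (w : V) (n : ℕ) : ℝ :=
  ∫ v : V, ‖v‖ ^ (2 * s) * Real.exp (-(1 / 4) * ‖v‖ ^ 2) * ⟪w, v⟫_ℝ ^ n

lemma integral_volumeIoiPow (k : ℕ) (f : ℝ → ℝ) :
    ∫ r : Ioi (0 : ℝ), f r ∂(Measure.volumeIoiPow k) = ∫ r in Ioi (0 : ℝ), r ^ k * f r := by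
  simp only [Measure.volumeIoiPow, ENNReal.ofReal]
  rw [integral_withDensity_eq_integral_smul,
    integral_subtype_comap measurableSet_Ioi fun a ↦ Real.toNNReal (a ^ k) • f a,
    setIntegral_congr_fun measurableSet_Ioi fun x hx ↦ ?_]
  · rw [NNReal.smul_def, Real.coe_toNNReal _ (pow_nonneg hx.out.le _), smul_eq_mul]
  · exact (measurable_subtype_coe.pow_const _).real_toNNReal

/-- Polar coordinates: the parameter `s` enters a moment only through the radial factor. -/
lemma gaussMoment_polar [Nontrivial V] {s : ℝ} (hs : 0 ≤ s) (w : V) (n : ℕ) :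
    gaussMoment s w n =
      (∫ u : Metric.sphere (0 : V) 1, ⟪w, (u : V)⟫_ℝ ^ n ∂(volume : Measure V).toSphere) *
        ((4 : ℝ) ^ (s + (n + finrank ℝ V) / 2) / 2 *
          Real.Gamma (s + (n + finrank ℝ V) / 2)) := by
  have hdim : 1 ≤ finrank ℝ V := finrank_pos
  have hradial : ∫ r : Ioi (0 : ℝ), (r : ℝ) ^ (2 * s + n) * Real.exp (-(1 / 4) * (r : ℝ) ^ 2)
        ∂(Measure.volumeIoiPow (finrank ℝ V - 1)) =
      (4 : ℝ) ^ (s + (n + finrank ℝ V) / 2) / 2 *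
          Real.Gamma (s + (n + finrank ℝ V) / 2) := by
    rw [integral_volumeIoiPow _ fun r ↦ r ^ (2 * s + n) * Real.exp (-(1 / 4) * r ^ 2)]
    have h := integral_rpow_mul_exp_neg_mul_rpow (p := 2)
      (q := 2 * s + n + (finrank ℝ V - 1 : ℕ)) (b := 1 / 4) two_pos
      (by have : (0 : ℝ) ≤ n := n.cast_nonneg
          have : (0 : ℝ) ≤ (finrank ℝ V - 1 : ℕ) := Nat.cast_nonneg _
          linarith) (by norm_num)
    have hq : (2 * s + n + (finrank ℝ V - 1 : ℕ) + 1) / 2 = s + (n + finrank ℝ V) / 2 := by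
      push_cast [hdim]; ring
    rw [neg_div, hq, one_div, Real.inv_rpow (by norm_num), ← Real.rpow_neg (by norm_num),
      neg_neg] at h
    rw [div_eq_mul_one_div ((4 : ℝ) ^ _), ← h]
    refine setIntegral_congr_fun measurableSet_Ioi fun r hr ↦ ?_
    have hr : 0 < r := hr
    rw [Real.rpow_add hr _ ((finrank ℝ V - 1 : ℕ) : ℝ), Real.rpow_natCast, Real.rpow_two]
    ring_nf
  rw [← hradial, ← integral_prod_mul, gaussMoment, ← setIntegral_univ,
    ← setIntegral_congr_set (ae_eq_univ.2 (by simp) : ({0}ᶜ : Set V) =ᵐ[volume] univ),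
    ← integral_subtype_comap (measurableSet_singleton _).compl,
    ← (volume : Measure V).measurePreserving_homeomorphUnitSphereProd.integral_comp
      (Homeomorph.measurableEmbedding _)]
  refine integral_congr_ae (.of_forall fun v ↦ ?_)
  have hv : 0 < ‖(v : V)‖ := norm_pos_iff.2 v.2
  simp only [homeomorphUnitSphereProd_apply_fst_coe, homeomorphUnitSphereProd_apply_snd_coe,
    inner_smul_right]
  rw [Real.rpow_add hv, Real.rpow_natCast, mul_pow, inv_pow]
  field_simp

lemma gaussMoment_eq_mul_zero [Nontrivial V] {s : ℝ} (hs : 0 ≤ s) (w : V) (n : ℕ) :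
    gaussMoment s w n = gaussMoment 0 w n * ((4 : ℝ) ^ s *
      Real.Gamma (s + (n + finrank ℝ V) / 2) / Real.Gamma ((n + finrank ℝ V) / 2)) := by
  have hdim : (0 : ℝ) < finrank ℝ V := by exact_mod_cast finrank_pos
  rw [gaussMoment_polar hs, gaussMoment_polar le_rfl, Real.rpow_add four_pos, zero_add]
  have := (Real.Gamma_pos_of_pos (show 0 < ((n : ℝ) + finrank ℝ V) / 2 by positivity)).ne'
  field_simp

/-- Integrability of the dominating function for the termwise integration of the exponential
series: the factor `exp (C ‖v‖)` is absorbed by half of the Gaussian. -/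
lemma integrable_radial [Nontrivial V] {s : ℝ} (hs : 0 ≤ s) (C : ℝ) :
    Integrable fun v : V ↦
      ‖v‖ ^ (2 * s) * Real.exp (-(1 / 4) * ‖v‖ ^ 2) * Real.exp (C * ‖v‖) := by
  have hdom : Integrable fun v : V ↦
      Real.exp (2 * C ^ 2) * (‖v‖ ^ (2 * s) * Real.exp (-(1 / 8) * ‖v‖ ^ 2)) := by
    refine Integrable.const_mul ?_ _
    rw [integrable_fun_norm_addHaar (volume : Measure V)
      (f := fun r ↦ r ^ (2 * s) * Real.exp (-(1 / 8) * r ^ 2))]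
    refine (integrableOn_rpow_mul_exp_neg_mul_sq (b := 1 / 8) (by norm_num)
      (s := (finrank ℝ V - 1 : ℕ) + 2 * s) ?_).congr_fun (fun r hr ↦ ?_) measurableSet_Ioi
    · have : (0 : ℝ) ≤ (finrank ℝ V - 1 : ℕ) := Nat.cast_nonneg _
      linarith
    · have hr : 0 < r := hr
      simp only [smul_eq_mul]
      rw [Real.rpow_add hr, Real.rpow_natCast]
      ring
  refine hdom.mono' ?_ (.of_forall fun v ↦ ?_)
  · have : Measurable fun v : V ↦ ‖v‖ ^ (2 * s) := by fun_prop
    exact (this.mul (by fun_prop) |>.mul (by fun_prop)).aestronglyMeasurable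
  · rw [Real.norm_of_nonneg (by positivity), mul_assoc, ← Real.exp_add, mul_left_comm,
      ← Real.exp_add]
    refine mul_le_mul_of_nonneg_left (Real.exp_le_exp.2 ?_) (by positivity)
    -- The difference of the exponents is `(‖v‖ - 4C)² / 8`.
    nlinarith [sq_nonneg (‖v‖ - 4 * C)]

/-- The generating function of the moments, for every complex parameter `c`: it covers both the
Fourier integral `c = i` and the identification of the moments by comparing coefficients. -/
lemma hasSum_gaussMoment [Nontrivial V] {s : ℝ} (hs : 0 ≤ s) (w : V) (c : ℂ) :
    HasSum (fun n : ℕ ↦ c ^ n * ((gaussMoment s w n / n.factorial : ℝ) : ℂ))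
      (∫ v : V, ((‖v‖ ^ (2 * s) * Real.exp (-(1 / 4) * ‖v‖ ^ 2) : ℝ) : ℂ) *
        Complex.exp (c * (⟪w, v⟫_ℝ : ℂ))) := by
  have hexp (y : ℝ) : HasSum (fun n : ℕ ↦ y ^ n / n.factorial) (Real.exp y) := by
    rw [Real.exp_eq_exp_ℝ]; exact NormedSpace.expSeries_div_hasSum_exp y
  have hmeas : Measurable fun v : V ↦ ‖v‖ ^ (2 * s) := by fun_prop
  have hb (v : V) := (hexp (‖c‖ * ‖w‖ * ‖v‖)).mul_left
    (‖v‖ ^ (2 * s) * Real.exp (-(1 / 4) * ‖v‖ ^ 2))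
  have key := hasSum_integral_of_dominated_convergence (μ := (volume : Measure V))
    (F := fun (n : ℕ) (v : V) ↦
      ((‖v‖ ^ (2 * s) * Real.exp (-(1 / 4) * ‖v‖ ^ 2) : ℝ) : ℂ) *
        ((c * (⟪w, v⟫_ℝ : ℂ)) ^ n / n.factorial))
    (f := fun v ↦ ((‖v‖ ^ (2 * s) * Real.exp (-(1 / 4) * ‖v‖ ^ 2) : ℝ) : ℂ) *
        Complex.exp (c * (⟪w, v⟫_ℝ : ℂ)))
    (fun n v ↦ ‖v‖ ^ (2 * s) * Real.exp (-(1 / 4) * ‖v‖ ^ 2) *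
      ((‖c‖ * ‖w‖ * ‖v‖) ^ n / n.factorial)) ?_ ?_ ?_ ?_ ?_
  · convert! key using 2 with n
    rw [gaussMoment, ← integral_div, ← integral_complex_ofReal, ← integral_const_mul]
    refine integral_congr_ae (.of_forall fun v ↦ ?_)
    simp only
    push_cast
    ring
  · intro n
    refine (Complex.measurable_ofReal.comp (hmeas.mul (by fun_prop))).aestronglyMeasurable.mul ?_
    exact Continuous.aestronglyMeasurable (by fun_prop)
  · refine fun n ↦ .of_forall fun v ↦ ?_
    rw [norm_mul, Complex.norm_real, Real.norm_of_nonneg (by positivity), norm_div, norm_pow,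
      norm_mul, Complex.norm_real, Complex.norm_natCast, mul_assoc ‖c‖]
    gcongr
    exact norm_inner_le_norm w v
  · exact .of_forall fun v ↦ (hb v).summable
  · simp_rw [fun v : V ↦ (hb v).tsum_eq]
    exact integrable_radial hs _
  · refine .of_forall fun v ↦ HasSum.mul_left _ ?_
    rw [Complex.exp_eq_exp_ℂ]
    exact NormedSpace.expSeries_div_hasSum_exp _

lemma hasSum_even {a : ℕ → ℂ} {S : ℂ} (h0 : ∀ n, ¬ Even n → a n = 0) :
    HasSum a S ↔ HasSum (fun m ↦ a (2 * m)) S := by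
  have hinj : Function.Injective fun m : ℕ ↦ 2 * m := fun _ _ h ↦ by simpa using h
  refine (hinj.hasSum_iff fun n hn ↦ h0 n fun ⟨m, hm⟩ ↦ hn ⟨m, ?_⟩).symm
  simp only; omega

lemma coeff_unique {f : ℂ → ℂ} {a b : ℕ → ℂ} (ha : ∀ c, HasSum (fun n ↦ c ^ n * a n) (f c))
    (hb : ∀ c, HasSum (fun n ↦ c ^ n * b n) (f c)) : a = b := by
  have aux {a : ℕ → ℂ} (ha : ∀ c, HasSum (fun n ↦ c ^ n * a n) (f c)) :
      HasFPowerSeriesAt f (FormalMultilinearSeries.ofScalars ℂ a) 0 := by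
    rw [hasFPowerSeriesAt_iff]
    exact .of_forall fun c ↦ by simpa [FormalMultilinearSeries.coeff_ofScalars] using ha c
  have h := (aux ha).eq_formalMultilinearSeries (aux hb)
  ext n
  simpa [FormalMultilinearSeries.coeff_ofScalars] using congrArg (fun p ↦ p.coeff n) h

/-- The moments at `s = 0`, read off from the Gaussian generating function
`(4π) ^ (d/2) exp (c² ‖w‖²)`; the weight is not normalised, whence the factor `(4π) ^ (d/2)`. -/
lemma gaussMoment_zero [Nontrivial V] (w : V) (n : ℕ) :
    gaussMoment 0 w n / n.factorial =
      if Even n then (4 * Real.pi) ^ ((finrank ℝ V : ℝ) / 2) *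
        ((‖w‖ ^ 2) ^ (n / 2) / (n / 2).factorial) else 0 := by
  have h := coeff_unique (fun c ↦ hasSum_gaussMoment le_rfl w c)
    (b := fun n ↦ ((if Even n then (4 * Real.pi) ^ ((finrank ℝ V : ℝ) / 2) *
        ((‖w‖ ^ 2) ^ (n / 2) / (n / 2).factorial) else 0 : ℝ) : ℂ)) fun c ↦ ?_
  · exact_mod_cast congrFun h n
  have hI : (∫ v : V, ((‖v‖ ^ (2 * (0 : ℝ)) * Real.exp (-(1 / 4) * ‖v‖ ^ 2) : ℝ) : ℂ) *
        Complex.exp (c * (⟪w, v⟫_ℝ : ℂ))) =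
      (((4 * Real.pi) ^ ((finrank ℝ V : ℝ) / 2) : ℝ) : ℂ) *
        Complex.exp (c ^ 2 * (‖w‖ : ℂ) ^ 2) := by
    have := GaussianFourier.integral_cexp_neg_mul_sq_norm_add (V := V) (b := 1 / 4) (by norm_num) c w
    convert! this using 2
    · ext v
      rw [Complex.exp_add]
      simp
    · rw [Complex.ofReal_cpow (by positivity)]
      push_cast
      congr 1
      ring
    · congr 1
      ring
  rw [hI, hasSum_even (fun n hn ↦ by simp [hn])]
  have := (NormedSpace.expSeries_div_hasSum_exp (c ^ 2 * (‖w‖ : ℂ) ^ 2)).mul_left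
    (((4 * Real.pi) ^ ((finrank ℝ V : ℝ) / 2) : ℝ) : ℂ)
  rw [← Complex.exp_eq_exp_ℂ] at this
  convert! this using 2 with m
  rw [if_pos (even_two_mul m), Nat.mul_div_cancel_left m two_pos]
  push_cast
  ring

end Moments

/-- The integral fractional Laplacian of the Gaussian:
`(−Δ)^s e^{−|x|²} = (2^{2s} Γ(s+d/2)/Γ(d/2)) ₁F₁(s+d/2; d/2; −|x|²)`,
with the left-hand side written through the Fourier inversion formula and the
right-hand side through the defining series of `₁F₁`. -/
theorem fractional_laplacian_gaussian (d : ℕ) (hd : 1 ≤ d) (s : ℝ) (hs : 0 < s)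
    (x : Fin d → ℝ) :
    ((((2 * Real.pi) ^ (-(d : ℝ) / 2) : ℝ)) : ℂ) *
        ∫ ξ : Fin d → ℝ,
          ((((∑ i, ξ i ^ 2) ^ s * (2 : ℝ) ^ (-(d : ℝ) / 2) *
              Real.exp (-(∑ i, ξ i ^ 2) / 4) : ℝ)) : ℂ) *
            Complex.exp (Complex.I * ((∑ i, x i * ξ i : ℝ) : ℂ)) =
      ((((2 : ℝ) ^ (2 * s) * Real.Gamma (s + d / 2) / Real.Gamma (d / 2) : ℝ)) : ℂ) *
        ∑' n : ℕ,
          ((Real.Gamma (s + d / 2 + n) * Real.Gamma (d / 2) /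
              (Real.Gamma (s + d / 2) * Real.Gamma (d / 2 + n)) : ℝ) : ℂ) *
            ((-(∑ i, x i ^ 2) : ℝ) : ℂ) ^ n / (n.factorial : ℂ) := by
  have : NeZero d := ⟨by omega⟩
  have hd' : (0 : ℝ) < d := by exact_mod_cast hd
  have hfin : finrank ℝ (EuclideanSpace ℝ (Fin d)) = d := by simp
  have hnorm (y : Fin d → ℝ) : ‖WithLp.toLp 2 y‖ ^ 2 = ∑ i, y i ^ 2 := by
    simp [EuclideanSpace.real_norm_sq_eq]
  set w : EuclideanSpace ℝ (Fin d) := WithLp.toLp 2 x with hw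
  -- `Fin d → ℝ` carries the sup norm, so the integral is moved to `EuclideanSpace ℝ (Fin d)`.
  have hint : (∫ ξ : Fin d → ℝ,
          ((((∑ i, ξ i ^ 2) ^ s * (2 : ℝ) ^ (-(d : ℝ) / 2) *
              Real.exp (-(∑ i, ξ i ^ 2) / 4) : ℝ)) : ℂ) *
            Complex.exp (Complex.I * ((∑ i, x i * ξ i : ℝ) : ℂ))) =
      (((2 : ℝ) ^ (-(d : ℝ) / 2) : ℝ) : ℂ) * ∫ v : EuclideanSpace ℝ (Fin d),
        ((‖v‖ ^ (2 * s) * Real.exp (-(1 / 4) * ‖v‖ ^ 2) : ℝ) : ℂ) *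
          Complex.exp (Complex.I * (⟪w, v⟫_ℝ : ℂ)) := by
    rw [← (PiLp.volume_preserving_toLp (Fin d)).integral_comp
      (MeasurableEquiv.toLp 2 _).measurableEmbedding, ← integral_const_mul]
    refine integral_congr_ae (.of_forall fun ξ ↦ ?_)
    have hinner : ⟪w, WithLp.toLp 2 ξ⟫_ℝ = ∑ i, x i * ξ i := by
      simp [hw, PiLp.inner_apply, mul_comm]
    simp only
    rw [Real.rpow_mul (norm_nonneg _), Real.rpow_two, hnorm, hinner,
      show -(1 / 4) * ∑ i, ξ i ^ 2 = -(∑ i, ξ i ^ 2) / 4 by ring]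
    push_cast
    ring
  have hsum := hasSum_gaussMoment hs.le w Complex.I
  rw [hasSum_even fun n hn ↦ by
    rw [gaussMoment_eq_mul_zero hs.le, mul_div_right_comm, gaussMoment_zero, if_neg hn]
    simp] at hsum
  -- The normalising constants cancel.
  have hconst : (2 * Real.pi) ^ (-(d : ℝ) / 2) * (2 : ℝ) ^ (-(d : ℝ) / 2) *
      (4 * Real.pi) ^ ((d : ℝ) / 2) = 1 := by
    rw [← Real.mul_rpow (by positivity) (by positivity), neg_div, Real.rpow_neg (by positivity),
      show 2 * Real.pi * 2 = 4 * Real.pi by ring]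
    exact inv_mul_cancel₀ (by positivity)
  rw [hint, ← hsum.tsum_eq, ← tsum_mul_left, ← tsum_mul_left, ← tsum_mul_left]
  refine tsum_congr fun m ↦ ?_
  have hΓ₁ := (Real.Gamma_pos_of_pos (show 0 < s + (d : ℝ) / 2 by positivity)).ne'
  have hΓ₂ := (Real.Gamma_pos_of_pos (show 0 < (d : ℝ) / 2 by positivity)).ne'
  have hΓ₃ := (Real.Gamma_pos_of_pos (show 0 < (d : ℝ) / 2 + m by positivity)).ne'
  have h4 : (2 : ℝ) ^ (2 * s) = 4 ^ s := by
    rw [Real.rpow_mul two_pos.le]; norm_num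
  rw [gaussMoment_eq_mul_zero hs.le, mul_div_right_comm, gaussMoment_zero,
    if_pos (even_two_mul m), Nat.mul_div_cancel_left m two_pos, hfin, hw, hnorm, h4, pow_mul,
    Complex.I_sq,
    show (((2 * m : ℕ) : ℝ) + d) / 2 = d / 2 + m by push_cast; ring, ← add_assoc]
  rw [← Complex.ofReal_natCast, show (-1 : ℂ) = ((-1 : ℝ) : ℂ) by simp]
  simp only [← Complex.ofReal_mul, ← Complex.ofReal_div, ← Complex.ofReal_pow]
  rw [Complex.ofReal_inj, neg_pow (∑ i, x i ^ 2)]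
  generalize (2 * Real.pi) ^ (-(d : ℝ) / 2) = A at hconst ⊢
  generalize (2 : ℝ) ^ (-(d : ℝ) / 2) = B at hconst ⊢
  generalize (4 * Real.pi) ^ ((d : ℝ) / 2) = C at hconst ⊢
  field_simp
  linear_combination (∑ i, x i ^ 2) ^ m * hconst
end
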